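/- For every point τ₀ = x₀ + iy₀ ∈ ℍ there exists an open neighborhood N ⊆ ℍ of τ₀ such that for every [a,b,c] ∈ 𝒬_D with a|τ₀|² + bx₀ + c ≠ 0 and every τ = x + iy ∈ N, one has sgn(a|τ|² + bx + c) = sgn(a|τ₀|² + bx₀ + c) ≠ 0. -/

import Mathlib

noncomputable section

open MeasureTheory

/-- The set of integral binary quadratic forms `[a,b,c]` of discriminant `D`. -/
def QD (D : ℤ) : Set (ℤ × ℤ × ℤ) := {q | q.2.1 ^ 2 - 4 * q.1 * q.2.2 = D}

/-- `Q(τ,1) = a τ² + b τ + c`. -/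
def Qval (q : ℤ × ℤ × ℤ) (τ : ℂ) : ℂ :=
  (q.1 : ℂ) * τ ^ 2 + (q.2.1 : ℂ) * τ + (q.2.2 : ℂ)

/-- `a|τ|² + b x + c` where `τ = x + iy`. -/
def Qell (q : ℤ × ℤ × ℤ) (τ : ℂ) : ℝ :=
  (q.1 : ℝ) * Complex.normSq τ + (q.2.1 : ℝ) * τ.re + (q.2.2 : ℝ)

/-- `ψ(v) = (1/2) ∫₀ᵛ u^(k-3/2) (1-u)^(-1/2) du`. -/
def psi (k : ℕ) (v : ℝ) : ℝ :=
  (1 / 2) * ∫ u in (0:ℝ)..v, u ^ ((k : ℝ) - 3 / 2) * (1 - u) ^ (-(1:ℝ) / 2)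

/-- real power of the integer `D`, as a complex number. -/
def Dpow (D : ℤ) (e : ℝ) : ℂ := (((D : ℝ) ^ e : ℝ) : ℂ)

/-- The summand of the series defining `F_{1-k,D}`. -/
def Fsummand (k : ℕ) (D : ℤ) (τ : ℂ) (q : ℤ × ℤ × ℤ) : ℂ :=
  ((Real.sign (Qell q τ) : ℝ) : ℂ) * Qval q τ ^ (k - 1) *
    ((psi k ((D : ℝ) * τ.im ^ 2 / Complex.normSq (Qval q τ)) : ℝ) : ℂ)

/-- `F_{1-k,D}`. -/
def F (k : ℕ) (D : ℤ) (τ : ℂ) : ℂ :=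
  (Dpow D (1 / 2 - (k : ℝ)) / (((Nat.choose (2 * k - 2) (k - 1) : ℝ) * Real.pi : ℝ) : ℂ)) *
    ∑' q : QD D, Fsummand k D τ (q : ℤ × ℤ × ℤ)

/-- `f_{k,D}`. -/
def fkD (k : ℕ) (D : ℤ) (τ : ℂ) : ℂ :=
  (Dpow D ((k : ℝ) - 1 / 2) / (((Nat.choose (2 * k - 2) (k - 1) : ℝ) * Real.pi : ℝ) : ℂ)) *
    ∑' q : QD D, Qval (q : ℤ × ℤ × ℤ) τ ^ (-(k : ℤ))

/-- Action of `SL₂(ℤ)` on binary quadratic forms: `(Q ∘ γ)(X,Y) = Q(pX+qY, rX+sY)`. -/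
def QAct (q : ℤ × ℤ × ℤ) (γ : Matrix.SpecialLinearGroup (Fin 2) ℤ) : ℤ × ℤ × ℤ :=
  (q.1 * (γ.1 0 0) ^ 2 + q.2.1 * (γ.1 0 0) * (γ.1 1 0) + q.2.2 * (γ.1 1 0) ^ 2,
   2 * q.1 * (γ.1 0 0) * (γ.1 0 1) + q.2.1 * ((γ.1 0 0) * (γ.1 1 1) + (γ.1 0 1) * (γ.1 1 0))
     + 2 * q.2.2 * (γ.1 1 0) * (γ.1 1 1),
   q.1 * (γ.1 0 1) ^ 2 + q.2.1 * (γ.1 0 1) * (γ.1 1 1) + q.2.2 * (γ.1 1 1) ^ 2)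

/-- A narrow class: an orbit of the `SL₂(ℤ)`-action on `QD D`. -/
def IsNarrowClass (D : ℤ) (𝒜 : Set (ℤ × ℤ × ℤ)) : Prop :=
  ∃ q₀ ∈ QD D, 𝒜 = {q | ∃ γ : Matrix.SpecialLinearGroup (Fin 2) ℤ, QAct q₀ γ = q}

/-- `F_{1-k,D,𝒜}`. -/
def FA (k : ℕ) (D : ℤ) (𝒜 : Set (ℤ × ℤ × ℤ)) (τ : ℂ) : ℂ :=
  ((-1 : ℂ) ^ k * Dpow D (1 / 2 - (k : ℝ)) /
      (((Nat.choose (2 * k - 2) (k - 1) : ℝ) * Real.pi : ℝ) : ℂ)) *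
    ∑' q : 𝒜, Fsummand k D τ (q : ℤ × ℤ × ℤ)

/-- `f_{k,D,𝒜}`. -/
def fA (k : ℕ) (D : ℤ) (𝒜 : Set (ℤ × ℤ × ℤ)) (τ : ℂ) : ℂ :=
  ((-1 : ℂ) ^ k * Dpow D ((k : ℝ) - 1 / 2) /
      (((Nat.choose (2 * k - 2) (k - 1) : ℝ) * Real.pi : ℝ) : ℂ)) *
    ∑' q : 𝒜, Qval (q : ℤ × ℤ × ℤ) τ ^ (-(k : ℤ))

/-- Partial derivative in the real direction `x`. -/
def dxx (G : ℂ → ℂ) (τ : ℂ) : ℂ :=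
  deriv (fun x : ℝ => G ((x : ℂ) + (τ.im : ℂ) * Complex.I)) τ.re

/-- Partial derivative in the imaginary direction `y`. -/
def dyy (G : ℂ → ℂ) (τ : ℂ) : ℂ :=
  deriv (fun y : ℝ => G ((τ.re : ℂ) + (y : ℂ) * Complex.I)) τ.im

/-- Wirtinger derivative `∂/∂τ̄ = (1/2)(∂/∂x + i ∂/∂y)`. -/
def wirDbar (G : ℂ → ℂ) (τ : ℂ) : ℂ := (dxx G τ + Complex.I * dyy G τ) / 2

/-- Wirtinger derivative `∂/∂τ = (1/2)(∂/∂x - i ∂/∂y)`. -/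
def wirD (G : ℂ → ℂ) (τ : ℂ) : ℂ := (dxx G τ - Complex.I * dyy G τ) / 2

/-- The operator `ξ_{2-2k}(G)(τ) = 2 i y^{2-2k} conj(∂G/∂τ̄)`. -/
def xiOp (k : ℕ) (G : ℂ → ℂ) (τ : ℂ) : ℂ :=
  2 * Complex.I * (τ.im : ℂ) ^ ((2 : ℤ) - 2 * (k : ℤ)) * (starRingEnd ℂ) (wirDbar G τ)

/-- The operator `𝒟 = (1/(2πi)) ∂/∂τ`. -/
def Dop (G : ℂ → ℂ) : ℂ → ℂ := fun τ => (1 / (2 * (Real.pi : ℂ) * Complex.I)) * wirD G τ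

/-- The weight `2-2k` hyperbolic Laplacian. -/
def DeltaOp (k : ℕ) (G : ℂ → ℂ) (τ : ℂ) : ℂ :=
  -(τ.im : ℂ) ^ 2 * (dxx (fun z => dxx G z) τ + dyy (fun z => dyy G z) τ)
    + Complex.I * ((2 : ℂ) - 2 * (k : ℂ)) * (τ.im : ℂ) * (dxx G τ + Complex.I * dyy G τ)

/-- `φ(v) = ∫₀ᵛ sin(u)^{2k-2} du`. -/
def phi (k : ℕ) (v : ℝ) : ℝ := ∫ u in (0:ℝ)..v, Real.sin u ^ (2 * k - 2)

/-- `φ̂(τ) = τ^{k-1} sgn(x) φ(arctan|y/x|)`, with value `0` when `x = 0`. -/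
def phiHat (k : ℕ) (τ : ℂ) : ℂ :=
  τ ^ (k - 1) * ((Real.sign τ.re : ℝ) : ℂ) *
    ((phi k (Real.arctan |τ.im / τ.re|) : ℝ) : ℂ)

/-- The non-holomorphic Eichler integral
`f^*(τ) = (2i)^{1-2k} ∫_{-τ̄}^{i∞} conj(f(-z̄)) (z+τ)^{2k-2} dz`,
parametrized along the vertical path `z = -τ̄ + it`, `t ∈ (0,∞)`. -/
def fstar (k : ℕ) (f : ℂ → ℂ) (τ : ℂ) : ℂ :=
  (2 * Complex.I) ^ ((1 : ℤ) - 2 * (k : ℤ)) * Complex.I *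
    ∫ t in Set.Ioi (0 : ℝ), (starRingEnd ℂ) (f (τ + (t : ℂ) * Complex.I)) *
      (((2 * τ.im + t : ℝ) : ℂ) * Complex.I) ^ (2 * k - 2)

/-- `a : ℕ → ℂ` is the sequence of Fourier coefficients of `f` (with `a n` the
coefficient of `e^{2πi(n+1)τ}`). -/
def HasFourier (a : ℕ → ℂ) (f : ℂ → ℂ) : Prop :=
  ∀ τ : ℂ, 0 < τ.im →
    f τ = ∑' n : ℕ, a n * Complex.exp (2 * (Real.pi : ℂ) * Complex.I * ((n : ℂ) + 1) * τ)

/-- The holomorphic Eichler integral `ℰ_f(τ) = ∑_{n≥1} (a_n/n^{2k-1}) e^{2πinτ}`. -/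
def EichlerE (k : ℕ) (a : ℕ → ℂ) (τ : ℂ) : ℂ :=
  ∑' n : ℕ, a n / ((n : ℂ) + 1) ^ (2 * k - 1) *
    Complex.exp (2 * (Real.pi : ℂ) * Complex.I * ((n : ℂ) + 1) * τ)

/-- `r_{a,b}(𝒜) = 1_{[Q_{a,b} ∈ 𝒜]} + (-1)^k 1_{[-Q_{a,b} ∈ 𝒜]}`. -/
def rab (k : ℕ) (D : ℤ) (𝒜 : Set (ℤ × ℤ × ℤ)) (a b : ℤ) : ℝ :=
  Set.indicator 𝒜 1 (a, b, (b ^ 2 - D) / (4 * a)) +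
    (-1 : ℝ) ^ k * Set.indicator 𝒜 1 (-a, -b, -((b ^ 2 - D) / (4 * a)))

/-- The constant `c_∞(𝒜)`. -/
def cInftyA (k : ℕ) (D : ℤ) (𝒜 : Set (ℤ × ℤ × ℤ)) : ℝ :=
  -(1 / (2 ^ (2 * k - 2) * (2 * (k : ℝ) - 1) * (Nat.choose (2 * k - 2) (k - 1) : ℝ))) *
    ∑' n : ℕ, (1 / ((n : ℝ) + 1) ^ k) *
      ∑ b ∈ Finset.range (2 * (n + 1)),
        if (4 * ((n : ℤ) + 1)) ∣ ((b : ℤ) ^ 2 - D) then rab k D 𝒜 ((n : ℤ) + 1) (b : ℤ) else 0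

/-- The constant `c_∞`. -/
def cInfty (k : ℕ) (D : ℤ) : ℝ :=
  -(1 / (2 ^ (2 * k - 3) * (2 * (k : ℝ) - 1) * (Nat.choose (2 * k - 2) (k - 1) : ℝ))) *
    ∑' n : ℕ, (1 / ((n : ℝ) + 1) ^ k) *
      (((Finset.range (2 * (n + 1))).filter
        (fun b : ℕ => (4 * ((n : ℤ) + 1)) ∣ ((b : ℤ) ^ 2 - D))).card : ℝ)

/-- The weight `2-2k` Hecke operator `T_p`. -/
def heckeT (k : ℕ) (p : ℕ) (g : ℂ → ℂ) (τ : ℂ) : ℂ :=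
  (p : ℂ) ^ ((1 : ℤ) - 2 * (k : ℤ)) * g ((p : ℂ) * τ) +
    (p : ℂ)⁻¹ * ∑ r ∈ Finset.range p, g ((τ + (r : ℂ)) / (p : ℂ))

open scoped Classical in
/-- The symbol `(D|p)`. -/
def legSym (D : ℤ) (p : ℕ) : ℤ :=
  if (p : ℤ) ∣ D then 0
  else if p = 2 then (if D % 8 = 1 ∨ D % 8 = 7 then 1 else -1)
  else if ∃ m : ℤ, (p : ℤ) ∣ (m ^ 2 - D) then 1 else -1

/-- Primitive forms of discriminant `D`. -/
def QDprim (D : ℤ) : Set (ℤ × ℤ × ℤ) :=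
  {q | q.2.1 ^ 2 - 4 * q.1 * q.2.2 = D ∧ Int.gcd q.1 (Int.gcd q.2.1 q.2.2) = 1}

/-- `F'_{1-k,D}`: the sum over primitive forms, with normalization `D^{(1-k)/2}`. -/
def Fprim (k : ℕ) (D : ℤ) (τ : ℂ) : ℂ :=
  (Dpow D ((1 - (k : ℝ)) / 2) / (((Nat.choose (2 * k - 2) (k - 1) : ℝ) * Real.pi : ℝ) : ℂ)) *
    ∑' q : QDprim D, Fsummand k D τ (q : ℤ × ℤ × ℤ)

/-- The root `η_Q = (-b+√D)/(2a)`. -/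
def etaQ (D : ℤ) (q : ℤ × ℤ × ℤ) : ℝ := (-(q.2.1 : ℝ) + Real.sqrt (D : ℝ)) / (2 * (q.1 : ℝ))

/-- The root `η'_Q = (-b-√D)/(2a)`. -/
def etaQ' (D : ℤ) (q : ℤ × ℤ × ℤ) : ℝ := (-(q.2.1 : ℝ) - Real.sqrt (D : ℝ)) / (2 * (q.1 : ℝ))

/-- The scaling matrix `A_Q`. -/
def AQ (D : ℤ) (q : ℤ × ℤ × ℤ) : Matrix (Fin 2) (Fin 2) ℝ :=
  (1 / Real.sqrt |etaQ D q - etaQ' D q|) •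
    !![1, -(etaQ' D q);
       -(Real.sign (etaQ D q - etaQ' D q)), Real.sign (etaQ D q - etaQ' D q) * etaQ D q]

/-- Real matrix associated to an element of `SL₂(ℤ)`. -/
def toR (γ : Matrix.SpecialLinearGroup (Fin 2) ℤ) : Matrix (Fin 2) (Fin 2) ℝ :=
  γ.1.map (fun n => (n : ℝ))

/-- Möbius action of a real `2×2` matrix on `ℂ`. -/
def moeb (g : Matrix (Fin 2) (Fin 2) ℝ) (τ : ℂ) : ℂ :=
  ((g 0 0 : ℝ) * τ + (g 0 1 : ℝ)) / ((g 1 0 : ℝ) * τ + (g 1 1 : ℝ))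

/-- Automorphy factor `j(g,τ) = cτ + d`. -/
def jfac (g : Matrix (Fin 2) (Fin 2) ℝ) (τ : ℂ) : ℂ :=
  ((g 1 0 : ℝ) : ℂ) * τ + ((g 1 1 : ℝ) : ℂ)

/-- `n`-th period `r_n(f) = ∫₀^∞ f(it) tⁿ dt`. -/
def periodR (f : ℂ → ℂ) (n : ℕ) : ℂ :=
  ∫ t in Set.Ioi (0 : ℝ), f ((t : ℂ) * Complex.I) * (t : ℂ) ^ n

/-- The even period polynomial `r⁺(f;X)`. -/
def rPlus (k : ℕ) (f : ℂ → ℂ) : Polynomial ℂ :=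
  ∑ m ∈ Finset.range k,
    Polynomial.C ((-1 : ℂ) ^ m * (Nat.choose (2 * k - 2) (2 * m) : ℂ) * periodR f (2 * m)) *
      Polynomial.X ^ (2 * k - 2 - 2 * m)

end

/- The geodesics `a|τ|² + bx + c = 0` attached to forms of bounded discriminant form a locally
finite family in `ℍ`: a form whose geodesic passes through `τ` satisfies
`max(|a|, |b|, |c|) ≤ √disc · cosh d(τ, i)`, so only finitely many integral forms have a geodesic
meeting a given hyperbolic ball. Hence `τ₀` has a connected neighborhood avoiding every geodesic
that does not pass through `τ₀` itself, and no sign can change on it. -/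

open Topology UpperHalfPlane

section SignOfContinuous

variable {X α : Type*} [TopologicalSpace X]
  [Zero α] [LinearOrder α] [TopologicalSpace α] [OrderTopology α]

theorem sign_eq_sign_of_isPreconnected {s : Set X} (hs : IsPreconnected s) {f : X → α}
    (hf : ContinuousOn f s) (hf0 : ∀ x ∈ s, f x ≠ 0) {x y : X} (hx : x ∈ s) (hy : y ∈ s) :
    SignType.sign (f x) = SignType.sign (f y) :=
  hs.constant (f := fun z ↦ SignType.sign (f z))
    (fun z hz ↦ (continuousAt_sign_of_ne_zero (hf0 z hz)).comp_continuousWithinAt (hf z hz)) hx hy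

theorem eventually_forall_sign_eq_of_locallyFinite_zeros [LocallyConnectedSpace X] {ι : Type*}
    {f : ι → X → α} (hf : ∀ i, Continuous (f i)) (hzeros : LocallyFinite fun i ↦ {x | f i x = 0})
    (x₀ : X) :
    ∀ᶠ x in 𝓝 x₀, ∀ i, f i x₀ ≠ 0 → SignType.sign (f i x) = SignType.sign (f i x₀) := by
  set V : Set X := ⋂ (i) (_ : f i x₀ ≠ 0), {x | f i x = 0}ᶜ
  have hV : V ∈ 𝓝 x₀ :=
    hzeros.iInter_compl_mem_nhds (fun i ↦ isClosed_singleton.preimage (hf i)) x₀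
  filter_upwards [connectedComponentIn_mem_nhds hV] with x hx i hi
  have hne : ∀ z ∈ connectedComponentIn V x₀, f i z ≠ 0 := fun z hz ↦
    Set.mem_iInter₂.1 (connectedComponentIn_subset V x₀ hz) i hi
  exact sign_eq_sign_of_isPreconnected isPreconnected_connectedComponentIn
    (hf i).continuousOn hne hx (mem_connectedComponentIn (mem_of_mem_nhds hV))

end SignOfContinuous

theorem realSign_eq_coe_sign (r : ℝ) : Real.sign r = (SignType.sign r : ℝ) := by
  rcases lt_trichotomy r 0 with hr | rfl | hr
  · simp [Real.sign_of_neg hr, _root_.sign_neg hr]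
  · simp
  · simp [Real.sign_of_pos hr, sign_pos hr]

/-- The discriminant `b² - 4ac` of the form `[a,b,c]`, so that `QD D` is its fiber over `D`. It is
used to treat all discriminants up to a bound at once. -/
def Qdisc (q : ℤ × ℤ × ℤ) : ℤ := q.2.1 ^ 2 - 4 * q.1 * q.2.2

theorem continuous_Qell (q : ℤ × ℤ × ℤ) : Continuous (Qell q) :=
  ((continuous_const.mul Complex.continuous_normSq).add
    (continuous_const.mul Complex.continuous_re)).add continuous_const

theorem cosh_dist_I (τ : ℍ) :
    Real.cosh (dist τ UpperHalfPlane.I) = (1 + Complex.normSq τ) / (2 * τ.im) := by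
  rw [cosh_dist', Complex.normSq_apply]
  simp only [I_re, I_im, coe_re, coe_im]
  ring

section ZerosOfQell

variable (q : ℤ × ℤ × ℤ) (τ : ℂ)

theorem Qdisc_eq_add_sq_sub : (Qdisc q : ℝ) =
    (2 * q.1 * τ.re + q.2.1) ^ 2 + (2 * τ.im * q.1) ^ 2 - 4 * q.1 * Qell q τ := by
  rw [Qdisc, Qell, Complex.normSq_apply]
  push_cast
  ring

theorem Qdisc_mul_normSq_eq_add_sq_sub : Qdisc q * Complex.normSq τ =
    (2 * q.1 * Complex.normSq τ + q.2.1 * τ.re) ^ 2 + (τ.im * q.2.1) ^ 2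
      - 4 * q.1 * Complex.normSq τ * Qell q τ := by
  rw [Qdisc, Qell, Complex.normSq_apply]
  push_cast
  ring

theorem Qdisc_mul_normSq_sq_eq_add_sq_sub : Qdisc q * Complex.normSq τ ^ 2 =
    (2 * q.2.2 * τ.re + q.2.1 * Complex.normSq τ) ^ 2 + (2 * τ.im * q.2.2) ^ 2
      - 4 * q.2.2 * Complex.normSq τ * Qell q τ := by
  rw [Qdisc, Qell, Complex.normSq_apply]
  push_cast
  ring

variable {q} {τ : ℍ}

theorem abs_le_sqrt_mul_cosh_dist_I {d n : ℝ}
    (h : (2 * τ.im * n) ^ 2 ≤ d * (1 + Complex.normSq τ) ^ 2) :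
    |n| ≤ √d * Real.cosh (dist τ UpperHalfPlane.I) := by
  have hnormSq : 0 ≤ 1 + Complex.normSq τ := add_nonneg zero_le_one (Complex.normSq_nonneg _)
  have him : 0 < 2 * τ.im := mul_pos two_pos τ.im_pos
  rw [cosh_dist_I, ← mul_div_assoc, le_div_iff₀ him]
  calc |n| * (2 * τ.im) = |2 * τ.im * n| := by rw [abs_mul, abs_of_pos him, mul_comm]
    _ ≤ √(d * (1 + Complex.normSq τ) ^ 2) := Real.abs_le_sqrt h
    _ = √d * (1 + Complex.normSq τ) := by
      rw [Real.sqrt_mul' _ (sq_nonneg _), Real.sqrt_sq hnormSq]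

theorem norm_le_sqrt_Qdisc_mul_cosh_dist_I (h : Qell q τ = 0) :
    ‖q‖ ≤ √(Qdisc q) * Real.cosh (dist τ UpperHalfPlane.I) := by
  have hfst := Qdisc_eq_add_sq_sub q τ
  have hmid := Qdisc_mul_normSq_eq_add_sq_sub q τ
  have hlast := Qdisc_mul_normSq_sq_eq_add_sq_sub q τ
  rw [h, mul_zero, sub_zero, coe_im] at hfst hmid hlast
  set d : ℝ := (Qdisc q : ℝ)
  set t : ℝ := Complex.normSq τ
  have ht : 0 ≤ t := Complex.normSq_nonneg _
  have hd : 0 ≤ d := hfst ▸ by positivity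
  have ha : (2 * τ.im * q.1) ^ 2 ≤ d * (1 + t) ^ 2 :=
    calc (2 * τ.im * q.1) ^ 2 ≤ d := hfst ▸ le_add_of_nonneg_left (sq_nonneg _)
      _ ≤ d * (1 + t) ^ 2 := le_mul_of_one_le_right hd (one_le_pow₀ (by linarith))
  have hb : (2 * τ.im * q.2.1) ^ 2 ≤ d * (1 + t) ^ 2 :=
    calc (2 * τ.im * q.2.1) ^ 2 = 4 * (τ.im * q.2.1) ^ 2 := by ring
      _ ≤ 4 * (d * t) := by rw [hmid]; gcongr; exact le_add_of_nonneg_left (sq_nonneg _)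
      _ = d * (4 * 1 * t) := by ring
      _ ≤ d * (1 + t) ^ 2 := by gcongr; exact four_mul_le_sq_add 1 t
  have hc : (2 * τ.im * q.2.2) ^ 2 ≤ d * (1 + t) ^ 2 :=
    calc (2 * τ.im * q.2.2) ^ 2 ≤ d * t ^ 2 := hlast ▸ le_add_of_nonneg_left (sq_nonneg _)
      _ ≤ d * (1 + t) ^ 2 := by gcongr; linarith
  simp only [Prod.norm_def, Int.norm_eq_abs, sup_le_iff]
  exact ⟨abs_le_sqrt_mul_cosh_dist_I ha, abs_le_sqrt_mul_cosh_dist_I hb,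
    abs_le_sqrt_mul_cosh_dist_I hc⟩

end ZerosOfQell

theorem finite_setOf_exists_Qell_eq_zero (D : ℤ) (R : ℝ) :
    {q | Qdisc q ≤ D ∧ ∃ τ ∈ Metric.ball UpperHalfPlane.I R, Qell q τ = 0}.Finite := by
  refine (isCompact_closedBall (0 : ℤ × ℤ × ℤ) (√D * Real.cosh R)).finite_of_discrete.subset ?_
  rintro q ⟨hqD, τ, hτ, hzero⟩
  have hdist : |dist τ UpperHalfPlane.I| ≤ |R| := by
    rw [abs_of_nonneg dist_nonneg]
    exact (Metric.mem_ball.1 hτ).le.trans (le_abs_self R)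
  rw [mem_closedBall_zero_iff]
  calc ‖q‖ ≤ √(Qdisc q) * Real.cosh (dist τ UpperHalfPlane.I) :=
        norm_le_sqrt_Qdisc_mul_cosh_dist_I hzero
    _ ≤ √D * Real.cosh R := by
      gcongr
      exact Real.cosh_le_cosh.2 hdist

theorem locallyFinite_setOf_Qell_eq_zero (D : ℤ) :
    LocallyFinite fun q : {q // Qdisc q ≤ D} ↦ {τ : ℍ | Qell q τ = 0} := by
  intro τ₀
  obtain ⟨R, hR⟩ := exists_gt (dist τ₀ UpperHalfPlane.I)
  refine ⟨Metric.ball UpperHalfPlane.I R, Metric.isOpen_ball.mem_nhds hR, ?_⟩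
  refine ((finite_setOf_exists_Qell_eq_zero D R).preimage Subtype.val_injective.injOn).subset ?_
  rintro q ⟨τ, hzero, hτ⟩
  exact ⟨q.2, τ, hτ, hzero⟩

theorem eventually_forall_sign_Qell_eq (D : ℤ) (τ₀ : ℍ) :
    ∀ᶠ τ : ℍ in 𝓝 τ₀, ∀ q, Qdisc q ≤ D → Qell q τ₀ ≠ 0 →
      Real.sign (Qell q τ) = Real.sign (Qell q τ₀) := by
  have hcont (q : {q // Qdisc q ≤ D}) : Continuous fun τ : ℍ ↦ Qell q τ :=
    (continuous_Qell q).comp continuous_coe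
  filter_upwards [eventually_forall_sign_eq_of_locallyFinite_zeros hcont
    (locallyFinite_setOf_Qell_eq_zero D) τ₀] with τ hτ q hqD hq
  rw [realSign_eq_coe_sign, realSign_eq_coe_sign, hτ ⟨q, hqD⟩ hq]

theorem stmt2_general (D : ℤ) (τ₀ : ℂ) (hτ₀ : 0 < τ₀.im) :
    ∃ N : Set ℂ, IsOpen N ∧ τ₀ ∈ N ∧ N ⊆ {τ : ℂ | 0 < τ.im} ∧
      ∀ q, Qdisc q ≤ D → Qell q τ₀ ≠ 0 →
        ∀ τ ∈ N, Real.sign (Qell q τ) = Real.sign (Qell q τ₀) ∧ Real.sign (Qell q τ₀) ≠ 0 := by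
  obtain ⟨U, hsign, hUopen, hmem⟩ :=
    eventually_nhds_iff.1 (eventually_forall_sign_Qell_eq D ⟨τ₀, hτ₀⟩)
  refine ⟨(↑) '' U, isOpenEmbedding_coe.isOpenMap U hUopen, ⟨⟨τ₀, hτ₀⟩, hmem, rfl⟩, ?_, ?_⟩
  · rintro _ ⟨τ, -, rfl⟩
    exact τ.im_pos
  · rintro q hqD hq _ ⟨τ, hτ, rfl⟩
    exact ⟨hsign τ hτ q hqD hq, Real.sign_eq_zero_iff.not.2 hq⟩

theorem stmt2 (D : ℤ) (hD : 0 < D) (hD4 : D % 4 = 0 ∨ D % 4 = 1)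
    (hDsq : ¬∃ m : ℤ, m ^ 2 = D) (τ₀ : ℂ) (hτ₀ : 0 < τ₀.im) :
    ∃ N : Set ℂ, IsOpen N ∧ τ₀ ∈ N ∧ N ⊆ {τ : ℂ | 0 < τ.im} ∧
      ∀ q ∈ QD D, Qell q τ₀ ≠ 0 →
        ∀ τ ∈ N, Real.sign (Qell q τ) = Real.sign (Qell q τ₀) ∧ Real.sign (Qell q τ₀) ≠ 0 := by
  obtain ⟨N, hN, hτ₀N, hNim, hsign⟩ := stmt2_general D τ₀ hτ₀
  exact ⟨N, hN, hτ₀N, hNim, fun q hq ↦ hsign q (le_of_eq hq)⟩
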